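/- arXiv:2107.01454 — 3 statements merged into one kernel-verified Lean document; each statement's English description precedes it below -/
import Mathlib

section
/- Let K : ℝ^N → ℝ^N be continuously differentiable with a fixed point q* = K(q*), and suppose every eigenvalue λ ∈ ℂ of the Jacobian matrix J = K'(q*) satisfies Re(λ) < 1. Then there exists θ_max > 0 such that for every θ ∈ (0, θ_max) there exist a Hermitian positive definite matrix P ∈ ℂ^{N×N} of the form P = U D U* with U unitary and D a positive definite diagonal matrix, a constant c ∈ (0,1), and a radius ρ > 0, such that the damped map K_θ(q) = (1−θ)q + θK(q) is locally contractive in the norm ‖x‖_P = (x* P x)^{1/2}: for all x, y ∈ ℝ^N with ‖x − q*‖_P ≤ ρ and ‖y − q*‖_P ≤ ρ one has ‖K_θ(x) − K_θ(y)‖_P ≤ c ‖x − y‖_P. -/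
open Matrix
open scoped ComplexOrder

/-- The norm `‖x‖_P = (x* P x)^{1/2}` associated with a Hermitian positive definite matrix. -/
noncomputable def pNorm {N : ℕ} (P : Matrix (Fin N) (Fin N) ℂ) (x : Fin N → ℂ) : ℝ :=
  Real.sqrt ((star x ⬝ᵥ P.mulVec x).re)

/-!
Damping by `θ` replaces the eigenvalue `λ` of the Jacobian by `1 + θ (λ - 1)`, whose squared
modulus is `1 - θ (2 (1 - Re λ) - θ |λ - 1|²)`; since the spectrum is compact, one `θmax` brings
all eigenvalues into the open unit disc. For an element `a` of spectral radius less than one,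
Gelfand's formula gives `k` with `‖a ^ k‖ < 1`, and `p = ∑ j < k, (a ^ j)* a ^ j` satisfies the
telescoping identity `a* p a = p - (1 - (a ^ k)* a ^ k)`. Its last term is bounded below by a
multiple of `1`, hence of `p`, so `a` contracts the norm of `p`. Strict differentiability transfers
this to the nonlinear map near the base point with an arbitrarily small loss in the constant.
-/

open Filter Topology Asymptotics
open scoped Matrix.Norms.L2Operator NNReal ENNReal MatrixOrder

section BanachAlgebra

variable {A : Type*} [NormedRing A] [NormedAlgebra ℂ A] [CompleteSpace A] {a : A}

lemma eventually_norm_pow_lt_one_of_spectralRadius_lt_one (h : spectralRadius ℂ a < 1) :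
    ∀ᶠ k : ℕ in atTop, ‖a ^ k‖ < 1 := by
  filter_upwards [(spectrum.gelfand_formula a).eventually_lt_const h, eventually_gt_atTop 0]
    with k hk hk_pos
  have hk_nnnorm : (‖a ^ k‖₊ : ℝ≥0∞) < 1 := by
    contrapose! hk
    exact ENNReal.one_le_rpow hk (by positivity)
  exact_mod_cast hk_nnnorm

lemma spectrum_one_sub_smul_one_add_smul {𝕜 B : Type*} [Field 𝕜] [Ring B] [Algebra 𝕜 B] (b : B)
    {t : 𝕜} (ht : t ≠ 0) :
    spectrum 𝕜 ((1 - t) • (1 : B) + t • b) = (fun z => (1 - t) + t * z) '' spectrum 𝕜 b := by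
  rw [← Algebra.algebraMap_eq_smul_one, ← spectrum.singleton_add_eq,
    show t • b = Units.mk0 t ht • b from rfl, spectrum.unit_smul_eq_smul, Set.singleton_add,
    ← Set.image_smul, Set.image_image]
  rfl

lemma norm_one_sub_add_mul_lt_one_iff {t : ℝ} (ht : 0 < t) (z : ℂ) :
    ‖(1 - (t : ℂ)) + t * z‖ < 1 ↔ t * ‖z - 1‖ ^ 2 < 2 * (1 - z.re) := by
  have hexpand : ‖(1 - (t : ℂ)) + t * z‖ ^ 2 =
      1 + t * (t * ‖z - 1‖ ^ 2 - 2 * (1 - z.re)) := by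
    simp only [Complex.sq_norm, Complex.normSq_apply, Complex.add_re, Complex.add_im,
      Complex.sub_re, Complex.sub_im, Complex.re_ofReal_mul, Complex.im_ofReal_mul,
      Complex.ofReal_re, Complex.ofReal_im, Complex.one_re, Complex.one_im]
    ring
  rw [← sq_lt_one_iff₀ (norm_nonneg _), hexpand, add_lt_iff_neg_left, ← sub_neg (b := 2 * _)]
  exact smul_neg_iff_of_pos_left ht

lemma eventually_spectralRadius_one_sub_smul_one_add_smul_lt_one
    (h : ∀ z ∈ spectrum ℂ a, z.re < 1) :
    ∀ᶠ t : ℝ in 𝓝[>] 0, spectralRadius ℂ ((1 - (t : ℂ)) • (1 : A) + (t : ℂ) • a) < 1 := by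
  cases subsingleton_or_nontrivial A with
  | inl _ => exact .of_forall fun t => by simp [spectralRadius, spectrum.of_subsingleton]
  | inr _ =>
    have hsmall : ∀ᶠ t : ℝ in 𝓝 0, ∀ z ∈ spectrum ℂ a, t * ‖z - 1‖ ^ 2 < 2 * (1 - z.re) := by
      refine (spectrum.isCompact a).eventually_forall_of_forall_eventually fun z hz => ?_
      refine ContinuousAt.eventually_lt (by fun_prop) (by fun_prop) ?_
      linarith [h z hz]
    filter_upwards [hsmall.filter_mono nhdsWithin_le_nhds, self_mem_nhdsWithin]
      with t hsmall_t (ht : 0 < t)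
    refine spectrum.spectralRadius_lt_of_forall_lt _ ?_
    rw [spectrum_one_sub_smul_one_add_smul a (by exact_mod_cast ht.ne'), Set.forall_mem_image]
    exact fun z hz => (norm_one_sub_add_mul_lt_one_iff ht z).2 (hsmall_t z hz)

end BanachAlgebra

lemma star_mul_sum_star_pow_mul_pow_mul {R : Type*} [Ring R] [StarRing R] (a : R) (k : ℕ) :
    star a * (∑ j ∈ Finset.range k, star (a ^ j) * a ^ j) * a =
      ∑ j ∈ Finset.range k, star (a ^ j) * a ^ j - (1 - star (a ^ k) * a ^ k) := by
  have hshift : star a * (∑ j ∈ Finset.range k, star (a ^ j) * a ^ j) * a =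
      ∑ j ∈ Finset.range k, star (a ^ (j + 1)) * a ^ (j + 1) := by
    simp only [Finset.mul_sum, Finset.sum_mul, pow_succ, star_mul, mul_assoc]
  rw [hshift, sub_sub_eq_add_sub, ← Finset.sum_range_succ (fun j => star (a ^ j) * a ^ j),
    Finset.sum_range_succ']
  simp

section CStarAlgebra

variable {A : Type*} [CStarAlgebra A] [PartialOrder A] [StarOrderedRing A]

lemma exists_sub_algebraMap_le_sq_smul {p : A} (hp : 0 ≤ p) {δ : ℝ} (hδ : 0 < δ) :
    ∃ c ∈ Set.Ico (0 : ℝ) 1, p - algebraMap ℝ A δ ≤ c ^ 2 • p := by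
  set t : ℝ := δ / (‖p‖ + δ)
  have ht : 0 < t := by positivity
  have ht_le : t ≤ 1 := div_le_one_of_le₀ (by linarith [norm_nonneg p]) (by positivity)
  have htp : t • p ≤ algebraMap ℝ A δ := calc
    t • p ≤ t • algebraMap ℝ A ‖p‖ :=
      smul_le_smul_of_nonneg_left (IsSelfAdjoint.of_nonneg hp).le_algebraMap_norm_self ht.le
    _ = algebraMap ℝ A (t * ‖p‖) := by rw [map_mul, Algebra.smul_def]
    _ ≤ algebraMap ℝ A δ := algebraMap_mono A <| by
      rw [div_mul_eq_mul_div, div_le_iff₀ (by positivity)]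
      nlinarith
  refine ⟨√(1 - t), ⟨Real.sqrt_nonneg _, (Real.sqrt_lt' one_pos).2 (by linarith)⟩, ?_⟩
  rw [Real.sq_sqrt (by linarith), sub_smul, one_smul]
  exact sub_le_sub_left htp p

lemma exists_isStrictlyPositive_star_mul_mul_le_sq_smul {a : A} (h : spectralRadius ℂ a < 1) :
    ∃ p : A, IsStrictlyPositive p ∧ ∃ c ∈ Set.Ico (0 : ℝ) 1, star a * p * a ≤ c ^ 2 • p := by
  obtain ⟨k, hk, hk_pos⟩ := ((eventually_norm_pow_lt_one_of_spectralRadius_lt_one h).and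
    (eventually_gt_atTop 0)).exists
  set p : A := ∑ j ∈ Finset.range k, star (a ^ j) * a ^ j
  have hp_ge : 1 ≤ p := by
    simpa only [pow_zero, star_one, one_mul] using
      Finset.single_le_sum (f := fun j => star (a ^ j) * a ^ j)
        (fun j _ => star_mul_self_nonneg (a ^ j)) (Finset.mem_range.2 hk_pos)
  have hp : IsStrictlyPositive p := .of_le isStrictlyPositive_one hp_ge
  have hδ : 0 < 1 - ‖a ^ k‖ ^ 2 := sub_pos.2 <| (sq_lt_one_iff₀ (norm_nonneg _)).2 hk
  obtain ⟨c, hc, hpc⟩ := exists_sub_algebraMap_le_sq_smul hp.nonneg hδ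
  refine ⟨p, hp, c, hc, le_trans ?_ hpc⟩
  rw [star_mul_sum_star_pow_mul_pow_mul, map_sub, map_one]
  gcongr
  exact CStarAlgebra.star_mul_le_algebraMap_norm_sq

end CStarAlgebra

section PosDef

variable {𝕜 n : Type*} [RCLike 𝕜] [Fintype n] [DecidableEq n]

lemma exists_unitary_posDef_isDiag_of_posDef {P : Matrix n n 𝕜} (hP : P.PosDef) :
    ∃ U D : Matrix n n 𝕜, U ∈ unitaryGroup n 𝕜 ∧ D.IsDiag ∧ D.PosDef ∧ P = U * D * Uᴴ :=
  ⟨hP.isHermitian.eigenvectorUnitary, diagonal (RCLike.ofReal ∘ hP.isHermitian.eigenvalues),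
    hP.isHermitian.eigenvectorUnitary.2, isDiag_diagonal _,
    .diagonal fun i => by simpa using hP.eigenvalues_pos i,
    by simpa only [Unitary.conjStarAlgAut_apply, star_eq_conjTranspose]
      using hP.isHermitian.spectral_theorem⟩

lemma exists_isUnit_eq_conjTranspose_mul_self_of_posDef {P : Matrix n n ℂ} (hP : P.PosDef) :
    ∃ B : Matrix n n ℂ, IsUnit B ∧ P = Bᴴ * B := by
  obtain ⟨hB, hPB⟩ :=
    CStarAlgebra.isStrictlyPositive_iff_isStrictlyPositive_sqrt_and_eq_sqrt_mul_sqrt.1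
      hP.isStrictlyPositive
  exact ⟨CFC.sqrt P, hB.isUnit, by rwa [← star_eq_conjTranspose, hB.isSelfAdjoint.star_eq]⟩

end PosDef

section PNorm

variable {N : ℕ}

lemma pNorm_conjTranspose_mul_self (B : Matrix (Fin N) (Fin N) ℂ) (x : Fin N → ℂ) :
    pNorm (Bᴴ * B) x = ‖WithLp.toLp 2 (B *ᵥ x)‖ := by
  rw [pNorm, ← mulVec_mulVec, dotProduct_mulVec, ← star_mulVec, EuclideanSpace.norm_eq]
  simp [dotProduct, Complex.sq_norm, Complex.normSq_apply]

lemma pNorm_mulVec_le {P M : Matrix (Fin N) (Fin N) ℂ} {c : ℝ} (hc : 0 ≤ c)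
    (h : Mᴴ * P * M ≤ c ^ 2 • P) (x : Fin N → ℂ) : pNorm P (M *ᵥ x) ≤ c * pNorm P x := by
  have hconj : star (M *ᵥ x) ⬝ᵥ P *ᵥ (M *ᵥ x) = star x ⬝ᵥ (Mᴴ * P * M) *ᵥ x := by
    rw [star_mulVec, ← dotProduct_mulVec, mulVec_mulVec, mulVec_mulVec, mul_assoc]
  have hle : star x ⬝ᵥ (Mᴴ * P * M) *ᵥ x ≤ star x ⬝ᵥ (c ^ 2 • P) *ᵥ x := by
    simpa only [sub_mulVec, dotProduct_sub, sub_nonneg]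
      using (Matrix.le_iff.1 h).dotProduct_mulVec_nonneg x
  calc pNorm P (M *ᵥ x) ≤ √(c ^ 2 * (star x ⬝ᵥ P *ᵥ x).re) := by
        rw [pNorm, hconj]
        refine Real.sqrt_le_sqrt ?_
        simpa only [smul_mulVec, dotProduct_smul, Complex.smul_re, smul_eq_mul]
          using (Complex.le_def.1 hle).1
    _ = c * pNorm P x := by rw [pNorm, Real.sqrt_mul (sq_nonneg c), Real.sqrt_sq hc]

lemma exists_antilipschitz_norm_eq_pNorm {P : Matrix (Fin N) (Fin N) ℂ} (hP : P.PosDef) :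
    ∃ L : (Fin N → ℝ) →L[ℝ] EuclideanSpace ℂ (Fin N),
      (∃ b, AntilipschitzWith b L) ∧ ∀ v, pNorm P (fun i => (v i : ℂ)) = ‖L v‖ := by
  obtain ⟨B, hB, rfl⟩ := exists_isUnit_eq_conjTranspose_mul_self_of_posDef hP
  let L : (Fin N → ℝ) →ₗ[ℝ] EuclideanSpace ℂ (Fin N) :=
    ((WithLp.linearEquiv 2 ℂ (Fin N → ℂ)).symm.toLinearMap ∘ₗ B.mulVecLin).restrictScalars ℝ ∘ₗ
      Complex.ofRealCLM.toLinearMap.compLeft (Fin N)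
  have hL : Function.Injective L :=
    (WithLp.toLp_injective 2).comp <| (mulVec_injective_of_isUnit hB).comp
      Complex.ofReal_injective.comp_left
  obtain ⟨b, -, hb⟩ := L.exists_antilipschitzWith (LinearMap.ker_eq_bot.2 hL)
  exact ⟨L.toContinuousLinearMap, ⟨b, hb⟩, fun v => pNorm_conjTranspose_mul_self B _⟩

end PNorm

lemma exists_closedBall_norm_map_sub_le_of_hasStrictFDerivAt {𝕜 E V : Type*}
    [NontriviallyNormedField 𝕜] [NormedAddCommGroup E] [NormedSpace 𝕜 E] [NormedAddCommGroup V]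
    [NormedSpace 𝕜 V] {L : E →L[𝕜] V} {b : ℝ≥0} (hL : AntilipschitzWith b L) {F : E → E}
    {F' : E →L[𝕜] E} {q : E} (hF : HasStrictFDerivAt F F' q) {c c' : ℝ}
    (hF' : ∀ v, ‖L (F' v)‖ ≤ c * ‖L v‖) (hc : c < c') :
    ∃ ρ > 0, ∀ x y, ‖L (x - q)‖ ≤ ρ → ‖L (y - q)‖ ≤ ρ →
      ‖L (F x - F y)‖ ≤ c' * ‖L (x - y)‖ := by
  have hremainder : (fun z : E × E => L (F z.1 - F z.2) - L (F' (z.1 - z.2))) =o[𝓝 (q, q)]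
      fun z => L (z.1 - z.2) := by
    have hLbound : (fun z : E × E => z.1 - z.2) =O[𝓝 (q, q)] fun z => L (z.1 - z.2) :=
      .of_bound b <| .of_forall fun z => by
        simpa only [dist_eq_norm, map_sub] using hL.le_mul_dist z.1 z.2
    simpa only [map_sub] using
      (L.isBigO_comp _ _).trans_isLittleO (hF.isLittleO.trans_isBigO hLbound)
  have hlinear : IsBigOWith c (𝓝 (q, q)) (fun z : E × E => L (F' (z.1 - z.2)))
      fun z => L (z.1 - z.2) := .of_bound <| .of_forall fun z => hF' (z.1 - z.2)
  have hnear : ∀ᶠ z in 𝓝 (q, q), ‖L (F z.1 - F z.2)‖ ≤ c' * ‖L (z.1 - z.2)‖ := by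
    simpa only [sub_add_cancel] using (hremainder.add_isBigOWith hlinear hc).bound
  have hbasis : (𝓝 q).HasBasis (fun ρ : ℝ => 0 < ρ) fun ρ => L ⁻¹' Metric.closedBall (L q) ρ := by
    rw [(hL.isInducing L.continuous).nhds_eq_comap]
    exact Metric.nhds_basis_closedBall.comap L
  rw [nhds_prod_eq, hbasis.prod_self.eventually_iff] at hnear
  obtain ⟨ρ, hρ, hball⟩ := hnear
  refine ⟨ρ, hρ, fun x y hx hy => hball (x := (x, y)) ⟨?_, ?_⟩⟩
  · simpa only [Set.mem_preimage, mem_closedBall_iff_norm, ← map_sub] using hx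
  · simpa only [Set.mem_preimage, mem_closedBall_iff_norm, ← map_sub] using hy

lemma exists_pNorm_contraction_of_spectralRadius_lt_one {N : ℕ} {F : (Fin N → ℝ) → (Fin N → ℝ)}
    {q : Fin N → ℝ} {J : Matrix (Fin N) (Fin N) ℝ}
    (hF : HasStrictFDerivAt F J.mulVecLin.toContinuousLinearMap q)
    (hJ : spectralRadius ℂ (J.map (algebraMap ℝ ℂ)) < 1) :
    ∃ P : Matrix (Fin N) (Fin N) ℂ, P.PosDef ∧ ∃ c ∈ Set.Ioo (0 : ℝ) 1, ∃ ρ > (0 : ℝ),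
      ∀ x y : Fin N → ℝ,
        pNorm P (fun i => (x i : ℂ) - (q i : ℂ)) ≤ ρ →
        pNorm P (fun i => (y i : ℂ) - (q i : ℂ)) ≤ ρ →
        pNorm P (fun i => (F x i : ℂ) - (F y i : ℂ)) ≤
          c * pNorm P (fun i => (x i : ℂ) - (y i : ℂ)) := by
  obtain ⟨P, hP, c, ⟨hc0, hc1⟩, hPJ⟩ := exists_isStrictlyPositive_star_mul_mul_le_sq_smul hJ
  obtain ⟨c', hcc', hc'1⟩ := exists_between hc1
  obtain ⟨L, ⟨b, hL⟩, hpNorm⟩ := exists_antilipschitz_norm_eq_pNorm hP.posDef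
  have hJL (v : Fin N → ℝ) : ‖L (J *ᵥ v)‖ ≤ c * ‖L v‖ := by
    have hcast : (fun i => ((J *ᵥ v) i : ℂ)) = J.map (algebraMap ℝ ℂ) *ᵥ fun i => (v i : ℂ) :=
      funext fun i => RingHom.map_mulVec (algebraMap ℝ ℂ) J v i
    rw [← hpNorm, ← hpNorm, hcast]
    exact pNorm_mulVec_le hc0 hPJ _
  have hsub (x y : Fin N → ℝ) : pNorm P (fun i => (x i : ℂ) - (y i : ℂ)) = ‖L (x - y)‖ := by
    simpa only [Pi.sub_apply, Complex.ofReal_sub] using hpNorm (x - y)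
  refine ⟨P, hP.posDef, c', ⟨hc0.trans_lt hcc', hc'1⟩, ?_⟩
  simpa only [hsub] using exists_closedBall_norm_map_sub_le_of_hasStrictFDerivAt hL hF hJL hcc'

lemma hasStrictFDerivAt_one_sub_smul_add_smul {𝕜 n : Type*} [NontriviallyNormedField 𝕜]
    [CompleteSpace 𝕜] [Fintype n] [DecidableEq n] {F : (n → 𝕜) → (n → 𝕜)} {J : Matrix n n 𝕜}
    {q : n → 𝕜} (hF : HasStrictFDerivAt F J.mulVecLin.toContinuousLinearMap q) (t : 𝕜) :
    HasStrictFDerivAt (fun x => (1 - t) • x + t • F x)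
      ((1 - t) • (1 : Matrix n n 𝕜) + t • J).mulVecLin.toContinuousLinearMap q := by
  refine (((hasStrictFDerivAt_id q).const_smul (1 - t)).add (hF.const_smul t)).congr_fderiv ?_
  ext1 v
  simp

lemma map_one_sub_smul_one_add_smul {R S n : Type*} [Ring R] [Ring S] [DecidableEq n] (f : R →+* S)
    (J : Matrix n n R) (t : R) :
    ((1 - t) • (1 : Matrix n n R) + t • J).map f =
      (1 - f t) • (1 : Matrix n n S) + f t • J.map f := by
  ext i j
  simp [one_apply, apply_ite]

theorem stmt_4_general {N : ℕ} {K : (Fin N → ℝ) → (Fin N → ℝ)} {q : Fin N → ℝ}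
    {J : Matrix (Fin N) (Fin N) ℝ}
    (hK : HasStrictFDerivAt K J.mulVecLin.toContinuousLinearMap q)
    (hJ : ∀ lam ∈ spectrum ℂ (J.map (algebraMap ℝ ℂ)), lam.re < 1) :
    ∃ θmax > (0 : ℝ), ∀ θ ∈ Set.Ioo (0 : ℝ) θmax,
      ∃ U D P : Matrix (Fin N) (Fin N) ℂ,
        U ∈ Matrix.unitaryGroup (Fin N) ℂ ∧
        D.IsDiag ∧ D.PosDef ∧
        P = U * D * Uᴴ ∧ P.IsHermitian ∧ P.PosDef ∧
        ∃ c ∈ Set.Ioo (0 : ℝ) 1, ∃ ρ > (0 : ℝ),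
          ∀ x y : Fin N → ℝ,
            pNorm P (fun i => (x i : ℂ) - (q i : ℂ)) ≤ ρ →
            pNorm P (fun i => (y i : ℂ) - (q i : ℂ)) ≤ ρ →
            pNorm P (fun i =>
                ((((1 - θ) • x + θ • K x) i : ℝ) : ℂ) - (((1 - θ) • y + θ • K y) i : ℝ)) ≤
              c * pNorm P (fun i => (x i : ℂ) - (y i : ℂ)) := by
  obtain ⟨θmax, hθmax, hradius⟩ := mem_nhdsGT_iff_exists_Ioo_subset.1
    (eventually_spectralRadius_one_sub_smul_one_add_smul_lt_one hJ)
  refine ⟨θmax, hθmax, fun θ hθ => ?_⟩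
  have hradius_θ : spectralRadius ℂ
      (((1 - θ) • (1 : Matrix (Fin N) (Fin N) ℝ) + θ • J).map (algebraMap ℝ ℂ)) < 1 := by
    rw [map_one_sub_smul_one_add_smul]
    exact hradius hθ
  obtain ⟨P, hP, hcontract⟩ := exists_pNorm_contraction_of_spectralRadius_lt_one
    (hasStrictFDerivAt_one_sub_smul_add_smul hK θ) hradius_θ
  obtain ⟨U, D, hU, hD_diag, hD, hPUD⟩ := exists_unitary_posDef_isDiag_of_posDef hP
  exact ⟨U, D, P, hU, hD_diag, hD, hPUD, hP.isHermitian, hP, hcontract⟩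

/-- If `K : ℝ^N → ℝ^N` is continuously differentiable with fixed point `q*` and
every eigenvalue of the Jacobian `J = K'(q*)` (as a complex matrix) has real part `< 1`, then
there is `θmax > 0` such that for every `θ ∈ (0, θmax)` there are a unitary `U`, a positive
definite diagonal `D`, `P = U D U*` Hermitian positive definite, a constant `c ∈ (0,1)` and a
radius `ρ > 0` such that the damped map `K_θ(q) = (1-θ)q + θK(q)` is a local contraction in the
norm `‖·‖_P` on the `P`-ball of radius `ρ` around `q*`. -/
theorem stmt_4 {N : ℕ}
    (K : (Fin N → ℝ) → (Fin N → ℝ)) (qstar : Fin N → ℝ)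
    (hK : ContDiff ℝ 1 K) (hfix : K qstar = qstar)
    (J : Matrix (Fin N) (Fin N) ℝ)
    (hJ : J = LinearMap.toMatrix' (fderiv ℝ K qstar).toLinearMap)
    (heig : ∀ lam ∈ spectrum ℂ (J.map (algebraMap ℝ ℂ)), lam.re < 1) :
    ∃ θmax > (0 : ℝ), ∀ θ ∈ Set.Ioo (0 : ℝ) θmax,
      ∃ U D P : Matrix (Fin N) (Fin N) ℂ,
        U ∈ Matrix.unitaryGroup (Fin N) ℂ ∧
        D.IsDiag ∧ D.PosDef ∧
        P = U * D * Uᴴ ∧ P.IsHermitian ∧ P.PosDef ∧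
        ∃ c ∈ Set.Ioo (0 : ℝ) 1, ∃ ρ > (0 : ℝ),
          ∀ x y : Fin N → ℝ,
            pNorm P (fun i => (x i : ℂ) - (qstar i : ℂ)) ≤ ρ →
            pNorm P (fun i => (y i : ℂ) - (qstar i : ℂ)) ≤ ρ →
            pNorm P (fun i =>
                ((((1 - θ) • x + θ • K x) i : ℝ) : ℂ) - (((1 - θ) • y + θ • K y) i : ℝ)) ≤
              c * pNorm P (fun i => (x i : ℂ) - (y i : ℂ)) := by
  refine stmt_4_general ((hK.contDiffAt.hasStrictFDerivAt one_ne_zero).congr_fderiv ?_) heig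
  exact ContinuousLinearMap.ext fun v => by simp [hJ, LinearMap.toMatrix'_mulVec]
end

section
/- Let S ∈ ℝ^{M×M} be symmetric positive definite with factorization S = LLᵀ, L invertible, let H ∈ ℝ^{M×M} be symmetric, and set A = L⁻¹ H L⁻ᵀ. Let (ε_i, c_i), i = 1,…,M, solve the generalized eigenvalue problem H c_i = ε_i S c_i, normalized so that the vectors Lᵀc_i, i = 1,…,M, form an orthonormal basis of ℝ^M. Let f : ℝ → ℝ, and define f(A) = Σ_{i=1}^M f(ε_i) (Lᵀc_i)(Lᵀc_i)ᵀ. Then for any subset α ⊆ {1,…,M}, writing E_α for the M×|α| matrix whose columns are the standard basis vectors indexed by α and I_α = E_α E_αᵀ, the Mulliken charge satisfies (1/2) Σ_{i=1}^M f(ε_i) ( c_iᵀ I_α S c_i + c_iᵀ S I_α c_i ) = tr( E_αᵀ L f(A) L⁻¹ E_α ). -/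
open Matrix

/-!
In terms of the density matrix `D = ∑ᵢ f(εᵢ) cᵢcᵢᵀ` one has `f(A) = LᵀDL`, hence `L f(A) L⁻¹ = SD`.
The two halves of the Mulliken charge are `tr(I_α S D)` and `tr(S I_α D)`, which agree because
transposing `S I_α D` reverses its symmetric factors to `D I_α S`, a cyclic permutation of `I_α S D`.
-/

section DensityMatrix

variable {ι m n R : Type*} [Fintype ι] [CommSemiring R]

/-- The density matrix `∑ᵢ wᵢ cᵢcᵢᵀ` of the orbitals `cᵢ` with occupation numbers `wᵢ`. The orbitals
need not be orthonormal, so that the coefficient vectors `cᵢ` of a nonorthogonal basis and their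
orthogonalizations `Lᵀcᵢ` are both allowed. -/
def densityMatrix (w : ι → R) (c : ι → n → R) : Matrix n n R :=
  ∑ i, w i • vecMulVec (c i) (c i)

theorem isSymm_densityMatrix (w : ι → R) (c : ι → n → R) : (densityMatrix w c).IsSymm := by
  simp only [IsSymm, densityMatrix, transpose_sum, transpose_smul, transpose_vecMulVec]

variable [Fintype n]

theorem densityMatrix_mulVec (B : Matrix m n R) (w : ι → R) (c : ι → n → R) :
    densityMatrix w (fun i ↦ B *ᵥ c i) = B * densityMatrix w c * Bᵀ := by
  simp only [densityMatrix, Matrix.mul_sum, Matrix.sum_mul, Matrix.mul_smul, Matrix.smul_mul,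
    mul_vecMulVec, vecMulVec_mul, vecMul_transpose]

theorem trace_mul_densityMatrix (B : Matrix n n R) (w : ι → R) (c : ι → n → R) :
    trace (B * densityMatrix w c) = ∑ i, w i * (c i ⬝ᵥ B *ᵥ c i) := by
  simp only [densityMatrix, Matrix.mul_sum, Matrix.mul_smul, mul_vecMulVec, trace_sum, trace_smul,
    trace_vecMulVec, smul_eq_mul, dotProduct_comm (B *ᵥ _)]

end DensityMatrix

theorem isSymm_mul_transpose {m n R : Type*} [Fintype n] [NonUnitalCommSemiring R]
    (B : Matrix m n R) : (B * Bᵀ).IsSymm := by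
  rw [IsSymm, transpose_mul, transpose_transpose]

theorem trace_mul_mul_swap_of_isSymm {n R : Type*} [Fintype n] [NonUnitalCommSemiring R]
    {P S D : Matrix n n R} (hP : P.IsSymm) (hS : S.IsSymm) (hD : D.IsSymm) :
    trace (S * P * D) = trace (P * S * D) :=
  calc trace (S * P * D) = trace (S * P * D)ᵀ := (trace_transpose _).symm
    _ = trace (D * (P * S)) := by rw [transpose_mul, transpose_mul, hP.eq, hS.eq, hD.eq]
    _ = trace (P * S * D) := trace_mul_comm _ _

theorem sum_mul_dotProduct_add_eq_two_mul_trace {ι n R : Type*} [Fintype ι] [Fintype n]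
    [CommSemiring R] {P S : Matrix n n R} (hP : P.IsSymm) (hS : S.IsSymm)
    (w : ι → R) (c : ι → n → R) :
    ∑ i, w i * (c i ⬝ᵥ (P * S) *ᵥ c i + c i ⬝ᵥ (S * P) *ᵥ c i) =
      2 * trace (P * S * densityMatrix w c) := by
  simp only [mul_add, Finset.sum_add_distrib, ← trace_mul_densityMatrix]
  rw [trace_mul_mul_swap_of_isSymm hP hS (isSymm_densityMatrix w c), two_mul]

theorem mul_densityMatrix_transpose_mulVec_mul {ι n k R : Type*} [Fintype ι] [Fintype n]
    [Fintype k] [DecidableEq n] [CommSemiring R] {L : Matrix n k R} {K : Matrix k n R}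
    (hLK : L * K = 1) (w : ι → R) (c : ι → n → R) :
    L * densityMatrix w (fun i ↦ Lᵀ *ᵥ c i) * K = L * Lᵀ * densityMatrix w c := by
  rw [densityMatrix_mulVec, transpose_transpose]
  simp only [Matrix.mul_assoc, hLK, Matrix.mul_one]

theorem stmt_10_general {ι m n k R : Type*} [Fintype ι] [Fintype m] [Fintype n] [Fintype k]
    [DecidableEq n] [CommSemiring R] {S : Matrix n n R} {L : Matrix n k R} {K : Matrix k n R}
    (hS : S = L * Lᵀ) (hLK : L * K = 1) (w : ι → R) (c : ι → n → R) (E : Matrix n m R) :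
    ∑ i, w i * (c i ⬝ᵥ (E * Eᵀ * S) *ᵥ c i + c i ⬝ᵥ (S * (E * Eᵀ)) *ᵥ c i) =
      2 * trace (Eᵀ * (L * densityMatrix w (fun i ↦ Lᵀ *ᵥ c i) * K) * E) := by
  have hS_symm : S.IsSymm := hS ▸ isSymm_mul_transpose L
  have trace_conj (X : Matrix n n R) : trace (Eᵀ * X * E) = trace (E * Eᵀ * X) := by
    rw [trace_mul_comm, Matrix.mul_assoc]
  rw [sum_mul_dotProduct_add_eq_two_mul_trace (isSymm_mul_transpose E) hS_symm, trace_conj,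
    mul_densityMatrix_transpose_mulVec_mul hLK, ← hS, Matrix.mul_assoc]

/-- Trace formula for the Mulliken charge. With `S = LLᵀ` positive definite,
`H` symmetric, generalized eigenpairs `H c_i = ε_i S c_i` normalized so that the vectors
`Lᵀ c_i` are orthonormal, and `f(A) = Σ_i f(ε_i) (Lᵀc_i)(Lᵀc_i)ᵀ` for `A = L⁻¹ H L⁻ᵀ`,
the Mulliken charge associated with an index set `α` satisfies
`(1/2) Σ_i f(ε_i) (c_iᵀ I_α S c_i + c_iᵀ S I_α c_i) = tr(E_αᵀ L f(A) L⁻¹ E_α)`. -/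
theorem stmt_10 {M : ℕ}
    (S L H : Matrix (Fin M) (Fin M) ℝ)
    (hSpd : S.PosDef) (hfact : S = L * Lᵀ) (hL : IsUnit L.det)
    (hH : H.IsSymm)
    (A : Matrix (Fin M) (Fin M) ℝ) (hA : A = L⁻¹ * H * Lᵀ⁻¹)
    (c : Fin M → Fin M → ℝ) (ε : Fin M → ℝ)
    (heig : ∀ i, H.mulVec (c i) = ε i • S.mulVec (c i))
    (horth : ∀ i j, (Lᵀ.mulVec (c i)) ⬝ᵥ (Lᵀ.mulVec (c j)) = if i = j then 1 else 0)
    (f : ℝ → ℝ)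
    (fA : Matrix (Fin M) (Fin M) ℝ)
    (hfA : fA = ∑ i, f (ε i) • Matrix.vecMulVec (Lᵀ.mulVec (c i)) (Lᵀ.mulVec (c i)))
    (α : Finset (Fin M))
    (Eα : Matrix (Fin M) {x // x ∈ α} ℝ)
    (hEα : ∀ i a, Eα i a = if i = (a : Fin M) then 1 else 0) :
    (1 / 2 : ℝ) * ∑ i, f (ε i) *
        (c i ⬝ᵥ (Eα * Eαᵀ * S).mulVec (c i) + c i ⬝ᵥ (S * (Eα * Eαᵀ)).mulVec (c i)) =
      Matrix.trace (Eαᵀ * (L * fA * L⁻¹) * Eα) := by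
  rw [stmt_10_general hfact (mul_nonsing_inv L hL) (fun i ↦ f (ε i)), hfA, densityMatrix,
    ← mul_assoc, one_div_mul_cancel two_ne_zero, one_mul]
end

section
/- Let m ≥ 2 and let b₁,…,b_m ∈ ℝ satisfy b_i ≥ 0, Σ_{i=1}^m b_i = 1, b₁ > 0 and b_m > 0. Let (e_n)_{n≥1} be a bounded sequence in ℝ^N such that e_{n+m} − Σ_{i=1}^m b_i e_{n+i−1} → 0 as n → ∞, and suppose that for some x ≥ 0, ‖e_{n+m−1}‖₂² + Σ_{j=2}^m ( Σ_{i=1}^{m−j+1} b_i ) ‖e_{n+m−j}‖₂² → x as n → ∞. Then ‖e_n‖₂ converges and lim_{n→∞} ‖e_n‖₂ = sqrt( x / ( 1 + Σ_{j=2}^m Σ_{i=1}^{m−j+1} b_i ) ). -/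
open Filter

/-!
Let `c 0, …, c (m - 1)` be the weights and put `V n = ∑ k < m, (∑ i ≤ k, c i) ‖e (n + k)‖²`.
Summation by parts gives `V (n + 1) - V n = ‖e (n + m)‖² - ∑ i < m, c i ‖e (n + i)‖²`. Since
`e (n + m)` is asymptotically the mean of the window `e n, …, e (n + m - 1)`, the right-hand side
is, up to `o(1)`, minus the weighted variance of that window. As `V` converges, the variance tends
to zero, so every entry of positive weight approaches the mean, hence approaches `e (n + m)`. For
the last entry this says that consecutive terms become close, and then `V n` is asymptotically
`‖e n‖²` times the total weight `∑ k < m, ∑ i ≤ k, c i`.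
-/

section SlidingSum

open Finset Topology

/-- The sum of the `m` consecutive terms `v n, …, v (n + m - 1)` of a sequence with weights `w`
(the moving average of `v` when the weights sum to one). The weights are indexed from `0`. -/
def slidingSum {R M : Type*} [AddCommMonoid M] [SMul R M] (w : ℕ → R) (m : ℕ) (v : ℕ → M) (n : ℕ) :
    M :=
  ∑ k ∈ range m, w k • v (n + k)

lemma slidingSum_partialSum_succ_sub {R M : Type*} [Ring R] [AddCommGroup M] [Module R M]
    (c : ℕ → R) (m : ℕ) (v : ℕ → M) (n : ℕ) :
    slidingSum (fun k => ∑ i ∈ range (k + 1), c i) m v (n + 1) -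
        slidingSum (fun k => ∑ i ∈ range (k + 1), c i) m v n =
      (∑ i ∈ range m, c i) • v (n + m) - slidingSum c m v n := by
  induction m with
  | zero => simp [slidingSum]
  | succ m ih =>
    simp only [slidingSum, sum_range_succ _ m] at ih ⊢
    rw [add_sub_add_comm, ih, add_assoc n 1 m, add_comm 1 m]
    simp only [add_smul]
    abel

lemma isBoundedUnder_of_isBoundedUnder_slidingSum {w a : ℕ → ℝ} {m j : ℕ}
    (hw : ∀ k < m, 0 ≤ w k) (hj : j < m) (hwj : 0 < w j) (ha : ∀ n, 0 ≤ a n)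
    (h : IsBoundedUnder (· ≤ ·) atTop (slidingSum w m a)) :
    IsBoundedUnder (· ≤ ·) atTop a := by
  obtain ⟨B, hB⟩ := h
  refine ⟨B / w j, ?_⟩
  rw [eventually_map] at hB ⊢
  rw [← map_add_atTop_eq_nat j, eventually_map]
  filter_upwards [hB] with n hn
  rw [le_div_iff₀' hwj]
  exact (single_le_sum (f := fun k => w k • a (n + k))
    (fun k hk => mul_nonneg (hw k (mem_range.mp hk)) (ha _)) (mem_range.mpr hj)).trans hn

lemma tendsto_add_sub_of_tendsto_succ_sub {G : Type*} [AddGroup G] [TopologicalSpace G]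
    [ContinuousAdd G] {a : ℕ → G} (ha : Tendsto (fun n => a (n + 1) - a n) atTop (𝓝 0)) (k : ℕ) :
    Tendsto (fun n => a (n + k) - a n) atTop (𝓝 0) := by
  induction k with
  | zero => simpa only [add_zero, sub_self] using tendsto_const_nhds
  | succ k ih =>
    have hsum := (ha.comp (tendsto_add_atTop_nat k)).add ih
    rw [add_zero] at hsum
    exact hsum.congr fun n => sub_add_sub_cancel _ _ _

lemma tendsto_of_tendsto_slidingSum {𝕜 M : Type*} [DivisionRing 𝕜] [AddCommGroup M] [Module 𝕜 M]
    [TopologicalSpace M] [IsTopologicalAddGroup M] [ContinuousConstSMul 𝕜 M] {a : ℕ → M}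
    (ha : Tendsto (fun n => a (n + 1) - a n) atTop (𝓝 0)) {w : ℕ → 𝕜} {m : ℕ}
    (hw : ∑ k ∈ range m, w k ≠ 0) {x : M} (h : Tendsto (slidingSum w m a) atTop (𝓝 x)) :
    Tendsto a atTop (𝓝 ((∑ k ∈ range m, w k)⁻¹ • x)) := by
  have herr : Tendsto (fun n => ∑ k ∈ range m, w k • (a (n + k) - a n)) atTop (𝓝 0) := by
    simpa using tendsto_finsetSum (range m) fun k _ =>
      (tendsto_add_sub_of_tendsto_succ_sub ha k).const_smul (w k)
  have hmain := (h.sub herr).const_smul (∑ k ∈ range m, w k)⁻¹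
  rw [sub_zero] at hmain
  refine hmain.congr fun n => ?_
  rw [slidingSum, ← sum_sub_distrib, inv_smul_eq_iff₀ hw, sum_smul]
  simp only [← smul_sub, sub_sub_cancel]

end SlidingSum

section WeightedVariance

open Finset Topology

lemma sum_mul_norm_sub_sum_smul_sq {ι E : Type*} [SeminormedAddCommGroup E] [InnerProductSpace ℝ E]
    {s : Finset ι} {c : ι → ℝ} (hc : ∑ i ∈ s, c i = 1) (v : ι → E) :
    ∑ i ∈ s, c i * ‖v i - ∑ j ∈ s, c j • v j‖ ^ 2 =
      ∑ i ∈ s, c i * ‖v i‖ ^ 2 - ‖∑ j ∈ s, c j • v j‖ ^ 2 := by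
  set w := ∑ j ∈ s, c j • v j with hw
  have hinner : ∑ i ∈ s, c i * inner ℝ (v i) w = ‖w‖ ^ 2 := by
    simp only [← real_inner_smul_left]
    rw [← sum_inner, ← hw, real_inner_self_eq_norm_sq]
  calc ∑ i ∈ s, c i * ‖v i - w‖ ^ 2
      = ∑ i ∈ s, (c i * ‖v i‖ ^ 2 - 2 * (c i * inner ℝ (v i) w) + c i * ‖w‖ ^ 2) :=
        sum_congr rfl fun i _ => by rw [norm_sub_sq_real]; ring
    _ = ∑ i ∈ s, c i * ‖v i‖ ^ 2 - 2 * ‖w‖ ^ 2 + ‖w‖ ^ 2 := by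
        rw [sum_add_distrib, sum_sub_distrib, ← mul_sum, hinner, ← sum_mul, hc, one_mul]
    _ = ∑ i ∈ s, c i * ‖v i‖ ^ 2 - ‖w‖ ^ 2 := by ring

lemma tendsto_zero_of_tendsto_sum_mul_norm_sq {ι α E : Type*} [SeminormedAddCommGroup E]
    {l : Filter α} {s : Finset ι} {c : ι → ℝ} (hc : ∀ i ∈ s, 0 ≤ c i) {u : α → ι → E}
    (h : Tendsto (fun a => ∑ i ∈ s, c i * ‖u a i‖ ^ 2) l (𝓝 0)) {j : ι} (hj : j ∈ s)
    (hcj : 0 < c j) : Tendsto (fun a => u a j) l (𝓝 0) := by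
  have hsq : Tendsto (fun a => ‖u a j‖ ^ 2) l (𝓝 0) := by
    have hlim := h.const_mul (c j)⁻¹
    rw [mul_zero] at hlim
    refine squeeze_zero (fun a => sq_nonneg _) (fun a => ?_) hlim
    rw [le_inv_mul_iff₀ hcj]
    exact single_le_sum (f := fun i => c i * ‖u a i‖ ^ 2)
      (fun i hi => mul_nonneg (hc i hi) (sq_nonneg _)) hj
  exact tendsto_zero_iff_norm_tendsto_zero.mpr (by simpa using hsq.sqrt)

lemma tendsto_norm_sq_sub_norm_sq {α E : Type*} [SeminormedAddCommGroup E] {l : Filter α}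
    {u v : α → E} (hu : IsBoundedUnder (· ≤ ·) l fun a => ‖u a‖)
    (h : Tendsto (fun a => u a - v a) l (𝓝 0)) :
    Tendsto (fun a => ‖u a‖ ^ 2 - ‖v a‖ ^ 2) l (𝓝 0) := by
  have hsub : Tendsto (fun a => ‖u a‖ - ‖v a‖) l (𝓝 0) :=
    squeeze_zero_norm (fun a => abs_norm_sub_norm_le _ _) (tendsto_zero_iff_norm_tendsto_zero.mp h)
  have hmul : Tendsto (fun a => (‖u a‖ - ‖v a‖) * ‖u a‖) l (𝓝 0) :=
    hsub.zero_mul_isBoundedUnder_le (by simpa [Function.comp_def] using hu)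
  have hdiff := (hmul.const_mul 2).sub (hsub.mul hsub)
  simp only [mul_zero, sub_zero] at hdiff
  exact hdiff.congr fun a => by ring

end WeightedVariance

section WindowEnergy

open Finset Topology

/-- The quantity `∑ k < m, (∑ i ≤ k, c i) ‖e (n + k)‖²` whose convergence is assumed in the theorem;
it acts as a Lyapunov function for the recurrence with weights `c`. The weight `c i` stands for the
paper's `b_{i+1}`. -/
def windowEnergy {E : Type*} [Norm E] (c : ℕ → ℝ) (m : ℕ) (e : ℕ → E) : ℕ → ℝ :=
  slidingSum (fun k => ∑ i ∈ range (k + 1), c i) m fun n => ‖e n‖ ^ 2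

lemma isBoundedUnder_norm_of_isBoundedUnder_windowEnergy {E : Type*} [SeminormedAddCommGroup E]
    {c : ℕ → ℝ} {m : ℕ} {e : ℕ → E} (hc0 : ∀ i < m, 0 ≤ c i) (hcsum : 0 < ∑ i ∈ range m, c i)
    (h : IsBoundedUnder (· ≤ ·) atTop (windowEnergy c m e)) :
    IsBoundedUnder (· ≤ ·) atTop fun n => ‖e n‖ := by
  obtain ⟨p, rfl⟩ : ∃ p, m = p + 1 :=
    Nat.exists_eq_add_one_of_ne_zero fun hm => by simp [hm] at hcsum
  have hw : ∀ k < p + 1, 0 ≤ ∑ i ∈ range (k + 1), c i := fun k hk =>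
    sum_nonneg fun i hi => hc0 i (by rw [mem_range] at hi; omega)
  obtain ⟨B, hB⟩ := isBoundedUnder_of_isBoundedUnder_slidingSum hw p.lt_succ_self hcsum
    (fun n => sq_nonneg ‖e n‖) h
  rw [eventually_map] at hB
  exact ⟨√B, eventually_map.mpr (hB.mono fun n => Real.le_sqrt_of_sq_le)⟩

variable {E : Type*} [SeminormedAddCommGroup E] [InnerProductSpace ℝ E] {c : ℕ → ℝ} {m : ℕ}
  {e : ℕ → E} {x : ℝ}

lemma tendsto_sum_mul_norm_sub_slidingSum_sq (hc0 : ∀ i < m, 0 ≤ c i)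
    (hcsum : ∑ i ∈ range m, c i = 1)
    (hrec : Tendsto (fun n => e (n + m) - slidingSum c m e n) atTop (𝓝 0))
    (hconv : Tendsto (windowEnergy c m e) atTop (𝓝 x)) :
    Tendsto (fun n => ∑ i ∈ range m, c i * ‖e (n + i) - slidingSum c m e n‖ ^ 2) atTop (𝓝 0) := by
  have hbdd := isBoundedUnder_norm_of_isBoundedUnder_windowEnergy hc0
    (hcsum ▸ one_pos) hconv.isBoundedUnder_le
  have hsq : Tendsto (fun n => ‖e (n + m)‖ ^ 2 - ‖slidingSum c m e n‖ ^ 2) atTop (𝓝 0) :=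
    tendsto_norm_sq_sub_norm_sq ((tendsto_add_atTop_nat m).isBoundedUnder_comp hbdd) hrec
  have hdiff := hsq.sub ((hconv.comp (tendsto_add_atTop_nat 1)).sub hconv)
  rw [sub_self, sub_zero] at hdiff
  refine hdiff.congr fun n => ?_
  have hparts := slidingSum_partialSum_succ_sub c m (fun n => ‖e n‖ ^ 2) n
  have hvar := sum_mul_norm_sub_sum_smul_sq hcsum fun i => e (n + i)
  rw [hcsum, one_smul] at hparts
  rw [Function.comp_apply, windowEnergy, hparts]
  simp only [slidingSum, smul_eq_mul] at hvar ⊢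
  rw [hvar, sub_sub_sub_cancel_left]

lemma tendsto_add_sub_add_of_tendsto_windowEnergy (hc0 : ∀ i < m, 0 ≤ c i)
    (hcsum : ∑ i ∈ range m, c i = 1)
    (hrec : Tendsto (fun n => e (n + m) - slidingSum c m e n) atTop (𝓝 0))
    (hconv : Tendsto (windowEnergy c m e) atTop (𝓝 x)) {j : ℕ} (hj : j < m) (hcj : 0 < c j) :
    Tendsto (fun n => e (n + m) - e (n + j)) atTop (𝓝 0) := by
  have hmean : Tendsto (fun n => e (n + j) - slidingSum c m e n) atTop (𝓝 0) :=
    tendsto_zero_of_tendsto_sum_mul_norm_sq (fun i hi => hc0 i (mem_range.mp hi))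
      (tendsto_sum_mul_norm_sub_slidingSum_sq hc0 hcsum hrec hconv)
      (mem_range.mpr hj) hcj
  simpa only [sub_sub_sub_cancel_right, sub_zero] using hrec.sub hmean

theorem tendsto_norm_of_tendsto_windowEnergy {p : ℕ} (hc0 : ∀ i < p + 1, 0 ≤ c i)
    (hcsum : ∑ i ∈ range (p + 1), c i = 1) (hcp : 0 < c p)
    (hrec : Tendsto (fun n => e (n + (p + 1)) - slidingSum c (p + 1) e n) atTop (𝓝 0))
    (hconv : Tendsto (windowEnergy c (p + 1) e) atTop (𝓝 x)) :
    Tendsto (fun n => ‖e n‖) atTop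
      (𝓝 √(x / ∑ k ∈ range (p + 1), ∑ i ∈ range (k + 1), c i)) := by
  have hbdd := isBoundedUnder_norm_of_isBoundedUnder_windowEnergy hc0
    (hcsum ▸ one_pos) hconv.isBoundedUnder_le
  have hsucc : Tendsto (fun n => e (n + 1) - e n) atTop (𝓝 0) :=
    (tendsto_add_atTop_iff_nat p).mp <| by
      simpa only [add_assoc, add_comm 1, add_left_comm 1] using
        tendsto_add_sub_add_of_tendsto_windowEnergy hc0 hcsum hrec hconv
          p.lt_succ_self hcp
  have hsq : Tendsto (fun n => ‖e (n + 1)‖ ^ 2 - ‖e n‖ ^ 2) atTop (𝓝 0) :=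
    tendsto_norm_sq_sub_norm_sq ((tendsto_add_atTop_nat 1).isBoundedUnder_comp hbdd) hsucc
  have hweight : 0 < ∑ k ∈ range (p + 1), ∑ i ∈ range (k + 1), c i := by
    rw [sum_range_succ, hcsum]
    refine add_pos_of_nonneg_of_pos (sum_nonneg fun k hk => sum_nonneg fun i hi => hc0 i ?_) one_pos
    rw [mem_range] at hk hi
    omega
  have hlim := (tendsto_of_tendsto_slidingSum hsq hweight.ne' hconv).sqrt
  simpa only [Real.sqrt_sq (norm_nonneg _), smul_eq_mul, inv_mul_eq_div] using hlim

end WindowEnergy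

section Reindexing

open Finset

lemma sum_Icc_one_eq_sum_range {M : Type*} [AddCommMonoid M] (f : ℕ → M) (m : ℕ) :
    ∑ i ∈ Icc 1 m, f i = ∑ i ∈ range m, f (i + 1) := by
  rw [range_eq_Ico, sum_Ico_add' f 0 m 1, zero_add, Ico_add_one_right_eq_Icc]

lemma add_sum_Icc_two_sub_eq_sum_range {M : Type*} [AddCommMonoid M] (f : ℕ → M) (p : ℕ) :
    f p + ∑ j ∈ Icc 2 (p + 1), f (p + 1 - j) = ∑ k ∈ range (p + 1), f k := by
  rw [← one_add_one_eq_two, Icc_add_one_left_eq_Ioc]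
  refine (add_sum_Ioc_eq_sum_Icc (f := fun j => f (p + 1 - j)) p.succ_pos).trans ?_
  rw [sum_Icc_one_eq_sum_range, ← sum_range_reflect f]
  simp only [Nat.add_sub_add_right, Nat.add_sub_cancel]

lemma add_sum_Icc_two_partialSum_mul {R : Type*} [Semiring R] {b : ℕ → R} {p : ℕ}
    (hb : ∑ i ∈ Icc 1 (p + 1), b i = 1) (a : ℕ → R) :
    a p + ∑ j ∈ Icc 2 (p + 1), (∑ i ∈ Icc 1 (p + 1 - j + 1), b i) * a (p + 1 - j) =
      ∑ k ∈ range (p + 1), (∑ i ∈ range (k + 1), b (i + 1)) * a k := by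
  simp only [← sum_Icc_one_eq_sum_range]
  rw [← add_sum_Icc_two_sub_eq_sum_range, hb, one_mul]

end Reindexing

theorem stmt_15_general {E : Type*} [SeminormedAddCommGroup E] [InnerProductSpace ℝ E]
    (m : ℕ) (b : ℕ → ℝ)
    (hb0 : ∀ i ∈ Finset.Icc 1 m, 0 ≤ b i)
    (hbsum : ∑ i ∈ Finset.Icc 1 m, b i = 1)
    (hbm : 0 < b m)
    (e : ℕ → E)
    (hrec : Tendsto (fun n => e (n + m) - ∑ i ∈ Finset.Icc 1 m, b i • e (n + i - 1))
      atTop (nhds 0))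
    (x : ℝ)
    (hconv : Tendsto
      (fun n => ‖e (n + m - 1)‖ ^ 2 +
        ∑ j ∈ Finset.Icc 2 m, (∑ i ∈ Finset.Icc 1 (m - j + 1), b i) * ‖e (n + m - j)‖ ^ 2)
      atTop (nhds x)) :
    Tendsto (fun n => ‖e n‖) atTop
      (nhds (Real.sqrt (x / (1 + ∑ j ∈ Finset.Icc 2 m, ∑ i ∈ Finset.Icc 1 (m - j + 1), b i)))) := by
  obtain ⟨p, rfl⟩ : ∃ p, m = p + 1 :=
    Nat.exists_eq_add_one_of_ne_zero fun hm => by simp [hm] at hbsum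
  have hweight : 1 + ∑ j ∈ Finset.Icc 2 (p + 1), ∑ i ∈ Finset.Icc 1 (p + 1 - j + 1), b i =
      ∑ k ∈ Finset.range (p + 1), ∑ i ∈ Finset.range (k + 1), b (i + 1) := by
    simpa only [mul_one] using add_sum_Icc_two_partialSum_mul hbsum fun _ => 1
  have henergy : ∀ n, ‖e (n + (p + 1) - 1)‖ ^ 2 + ∑ j ∈ Finset.Icc 2 (p + 1),
        (∑ i ∈ Finset.Icc 1 (p + 1 - j + 1), b i) * ‖e (n + (p + 1) - j)‖ ^ 2 =
      windowEnergy (fun i => b (i + 1)) (p + 1) e n := fun n => by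
    refine .trans ?_ (add_sum_Icc_two_partialSum_mul hbsum fun k => ‖e (n + k)‖ ^ 2)
    refine congrArg _ (Finset.sum_congr rfl fun j hj => ?_)
    rw [Nat.add_sub_assoc (Finset.mem_Icc.mp hj).2]
  rw [hweight]
  refine tendsto_norm_of_tendsto_windowEnergy (c := fun i => b (i + 1))
    (fun i hi => hb0 (i + 1) (Finset.mem_Icc.mpr ⟨by omega, hi⟩))
    (sum_Icc_one_eq_sum_range b (p + 1) ▸ hbsum) hbm (hrec.congr fun n => ?_) (hconv.congr henergy)
  rw [sum_Icc_one_eq_sum_range]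
  rfl

/-- For a bounded sequence `(e_n)` in `ℝ^N` satisfying the asymptotic mixing
recurrence `e_{n+m} − Σ_{i=1}^m b_i e_{n+i−1} → 0` and such that the weighted combination
`‖e_{n+m−1}‖² + Σ_{j=2}^m (Σ_{i=1}^{m−j+1} b_i) ‖e_{n+m−j}‖²` converges to `x`, the norms
`‖e_n‖` converge to `sqrt (x / (1 + Σ_{j=2}^m Σ_{i=1}^{m−j+1} b_i))`. -/
theorem stmt_15 {N : ℕ} (m : ℕ) (hm : 2 ≤ m) (b : ℕ → ℝ)
    (hb0 : ∀ i ∈ Finset.Icc 1 m, 0 ≤ b i)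
    (hbsum : ∑ i ∈ Finset.Icc 1 m, b i = 1)
    (hb1 : 0 < b 1) (hbm : 0 < b m)
    (e : ℕ → EuclideanSpace ℝ (Fin N))
    (hbdd : ∃ C : ℝ, ∀ n, ‖e n‖ ≤ C)
    (hrec : Tendsto (fun n => e (n + m) - ∑ i ∈ Finset.Icc 1 m, b i • e (n + i - 1))
      atTop (nhds 0))
    (x : ℝ) (hx : 0 ≤ x)
    (hconv : Tendsto
      (fun n => ‖e (n + m - 1)‖ ^ 2 +
        ∑ j ∈ Finset.Icc 2 m, (∑ i ∈ Finset.Icc 1 (m - j + 1), b i) * ‖e (n + m - j)‖ ^ 2)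
      atTop (nhds x)) :
    Tendsto (fun n => ‖e n‖) atTop
      (nhds (Real.sqrt (x / (1 + ∑ j ∈ Finset.Icc 2 m, ∑ i ∈ Finset.Icc 1 (m - j + 1), b i)))) :=
  stmt_15_general m b hb0 hbsum hbm e hrec x hconv
end
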